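/- arXiv:1705.05900 — 2 statements merged into one kernel-verified Lean document; each statement's English description precedes it below -/
import Mathlib

section
/- Let k ⊆ F be an extension of fields with the characteristic of k different from 2. Let L be a non-zero Lie subalgebra of Der_k(F) (the k-linear derivations of F with commutator bracket) which is also closed under multiplication by elements of F (an F-submodule of Der_k(F)). Then L is a simple Lie algebra over k: L is non-abelian and its only Lie ideals are 0 and L. -/
/-!
Regard `L` as a Lie–Rinehart algebra over `F`, and let `I` be a Lie ideal containing some `x ≠ 0`.
If `x` and `a • x` both lie in `I`, then so does
`⁅x, (a * b) • y⁆ - ⁅a • x, b • y⁆ = (b * ⁅y, a⁆) • x + (b * ⁅x, a⁆) • y`,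
in which no Lie bracket of elements of `L` is left. As `⁅x, a • x⁆ = ⁅x, a⁆ • x`, the identity
applies to `⁅x, a⁆` in place of `a`; with `y = x` it puts all multiples of `2 * ⁅x, ⁅x, a⁆⁆` times
`x` into `I`. Away from characteristic two the Leibniz rule for `⁅x, ⁅x, u * u⁆⁆` shows that some
`⁅x, ⁅x, a⁆⁆` is non-zero, so `F • x ⊆ I`. Now the identity holds for every `a`, and taking `a` with
`⁅x, a⁆ ≠ 0` gives every `y`.
-/

section LieRinehartRing

variable {A L : Type*} [CommRing A] [LieRing L] [Module A L] [LieRingModule L A]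
  [LieRinehartRing A L]

theorem lie_smul_self_eq_lie_smul (x : L) (a : A) : ⁅x, a • x⁆ = ⁅x, a⁆ • x := by
  simp

theorem smul_lie_eq_smul_lie_sub (a : A) (x y : L) : ⁅a • x, y⁆ = a • ⁅x, y⁆ - ⁅y, a⁆ • x := by
  rw [← lie_skew, LieRinehartRing.leibniz_smul_right, ← lie_skew x y, smul_neg]
  abel

theorem lie_mul_smul_sub_smul_lie_smul (a b : A) (x y : L) :
    ⁅x, (a * b) • y⁆ - ⁅a • x, b • y⁆ = (b * ⁅y, a⁆) • x + (b * ⁅x, a⁆) • y := by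
  simp only [smul_lie_eq_smul_lie_sub, LieRinehartRing.leibniz_smul_right,
    LieRinehartRing.leibniz_mul_right, LieRinehartRing.lie_smul_eq_mul, smul_eq_mul]
  module

theorem lie_lie_mul_self (x : L) (u : A) :
    ⁅x, ⁅x, u * u⁆⁆ = 2 * u * ⁅x, ⁅x, u⁆⁆ + 2 * ⁅x, u⁆ ^ 2 := by
  simp only [LieRinehartRing.leibniz_mul_right, lie_add, smul_eq_mul]
  ring

theorem exists_lie_lie_ne_zero [NoZeroDivisors A] (h2 : (2 : A) ≠ 0) {x : L} {u : A}
    (hu : ⁅x, u⁆ ≠ 0) : ∃ a : A, ⁅x, ⁅x, a⁆⁆ ≠ 0 := by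
  by_contra! h
  have hsq : 2 * ⁅x, u⁆ ^ 2 = 0 := by
    rw [← h (u * u), lie_lie_mul_self, h u, mul_zero, zero_add]
  exact mul_ne_zero h2 (pow_ne_zero 2 hu) hsq

theorem not_isLieAbelian_of_lie_ne_zero [IsReduced A] {x : L} {u : A} (hu : ⁅x, u⁆ ≠ 0) :
    ¬IsLieAbelian L := by
  intro hab
  have hzero : ⁅x, u⁆ • x = 0 := by rw [← lie_smul_self_eq_lie_smul, hab.trivial]
  have hsq : ⁅x, u⁆ ^ 2 = 0 := by
    rw [sq, ← LieRinehartRing.lie_smul_eq_mul, hzero, zero_lie]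
  exact pow_ne_zero 2 hu hsq

end LieRinehartRing

section LieIdeal

variable {R A L : Type*} [CommRing R] [CommRing A] [LieRing L] [LieAlgebra R L] [Module A L]
  [LieRingModule L A] [LieRinehartRing A L] {I : LieIdeal R L} {x : L}

theorem lie_smul_mem_of_mem (hx : x ∈ I) (a : A) : ⁅x, a⁆ • x ∈ I := by
  rw [← lie_smul_self_eq_lie_smul]
  exact lie_mem_left R L I x _ hx

theorem mul_lie_smul_add_mul_lie_smul_mem (hx : x ∈ I) {a : A} (hax : a • x ∈ I) (b : A) (y : L) :
    (b * ⁅y, a⁆) • x + (b * ⁅x, a⁆) • y ∈ I := by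
  rw [← lie_mul_smul_sub_smul_lie_smul]
  exact sub_mem (lie_mem_left R L I x _ hx) (lie_mem_left R L I (a • x) _ hax)

theorem mul_two_mul_lie_lie_smul_mem (hx : x ∈ I) (a b : A) :
    (b * (2 * ⁅x, ⁅x, a⁆⁆)) • x ∈ I := by
  convert mul_lie_smul_add_mul_lie_smul_mem hx (lie_smul_mem_of_mem hx a) b x using 1
  module

end LieIdeal

theorem exists_lie_ne_zero_of_isFaithful (R : Type*) {L : Type*} (M : Type*) [CommRing R]
    [LieRing L] [LieAlgebra R L] [AddCommGroup M] [Module R M] [LieRingModule L M]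
    [LieModule R L M] [LieModule.IsFaithful R L M] {x : L} (hx : x ≠ 0) : ∃ m : M, ⁅x, m⁆ ≠ 0 := by
  contrapose! hx
  exact (LieModule.isFaithful_iff' R L M).1 inferInstance x hx

section Field

variable {R F L : Type*} [CommRing R] [Field F] [LieRing L] [LieAlgebra R L] [Module F L]
  [LieRingModule L F] [LieRinehartRing F L]

theorem smul_mem_of_lie_ne_zero (h2 : (2 : F) ≠ 0) {I : LieIdeal R L} {x : L} (hx : x ∈ I) {u : F}
    (hu : ⁅x, u⁆ ≠ 0) (c : F) : c • x ∈ I := by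
  obtain ⟨a, ha⟩ := exists_lie_lie_ne_zero h2 hu
  rw [← div_mul_cancel₀ c (mul_ne_zero h2 ha)]
  exact mul_two_mul_lie_lie_smul_mem hx a _

theorem lieIdeal_eq_top_of_lie_ne_zero (h2 : (2 : F) ≠ 0) {I : LieIdeal R L} {x : L} (hx : x ∈ I)
    {u : F} (hu : ⁅x, u⁆ ≠ 0) : I = ⊤ := by
  have hFx : ∀ c : F, c • x ∈ I := smul_mem_of_lie_ne_zero h2 hx hu
  refine eq_top_iff.2 fun y _ => ?_
  have hsum := mul_lie_smul_add_mul_lie_smul_mem hx (hFx u) ⁅x, u⁆⁻¹ y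
  rw [inv_mul_cancel₀ hu, one_smul] at hsum
  exact (add_mem_cancel_left (hFx _)).1 hsum

theorem lieAlgebra_isSimple_of_isFaithful [Module R F] [LieModule R L F]
    [LieModule.IsFaithful R L F] [Nontrivial L] (h2 : (2 : F) ≠ 0) : LieAlgebra.IsSimple R L := by
  refine ⟨fun I => or_iff_not_imp_left.2 fun hI => ?_, ?_⟩
  · obtain ⟨x, hxI, hx⟩ : ∃ x ∈ I, x ≠ 0 := by
      contrapose! hI
      exact (LieSubmodule.eq_bot_iff I).2 hI
    obtain ⟨u, hu⟩ := exists_lie_ne_zero_of_isFaithful R F hx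
    exact lieIdeal_eq_top_of_lie_ne_zero h2 hxI hu
  · obtain ⟨x, hx⟩ := exists_ne (0 : L)
    obtain ⟨u, hu⟩ := exists_lie_ne_zero_of_isFaithful R F hx
    exact not_isLieAbelian_of_lie_ne_zero hu

end Field

theorem lie_subalgebra_of_derivations_isSimple_general
    (R : Type*) [CommRing R] (F : Type*) [Field F] [Algebra R F]
    (hchar : ringChar F ≠ 2)
    (L : LieSubalgebra R (Derivation R F F))
    (hL : L ≠ ⊥)
    (hsmul : ∀ (f : F) (η : Derivation R F F), η ∈ L → f • η ∈ L) :
    LieAlgebra.IsSimple R L := by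
  let L' : LieRinehartSubalgebra F (Derivation R F F) :=
    { L.toAddSubmonoid with smul_mem' := fun f η => hsmul f η, lie_mem' := L.lie_mem }
  have : Nontrivial L' := show Nontrivial L.toSubmodule from
    Submodule.nontrivial_iff_ne_bot.2 ((LieSubalgebra.toSubmodule_eq_bot L).not.2 hL)
  have : LieModule.IsFaithful R L' F :=
    (LieModule.isFaithful_iff' R L' F).2 fun η hη => Subtype.ext (Derivation.ext hη)
  -- `L` and `L'` have the same elements, bracket and scalar action, all definitionally.
  exact lieAlgebra_isSimple_of_isFaithful (L := L') (Ring.two_ne_zero hchar)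

/-- A non-zero Lie subalgebra of `Der_k(F)` (for a field extension `k ⊆ F`,
`char k ≠ 2`) which is also an `F`-submodule is a simple Lie algebra over `k`. -/
theorem lie_subalgebra_of_derivations_isSimple
    (k : Type*) [Field k] (F : Type*) [Field F] [Algebra k F]
    (hchar : ringChar k ≠ 2)
    (L : LieSubalgebra k (Derivation k F F))
    (hL : L ≠ ⊥)
    (hsmul : ∀ (f : F) (η : Derivation k F F), η ∈ L → f • η ∈ L) :
    LieAlgebra.IsSimple k L :=
  lie_subalgebra_of_derivations_isSimple_general k F (Algebra.ringChar_eq k F ▸ hchar) L hL hsmul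
end

section
/- Let k be an algebraically closed field of characteristic 0, let h ∈ k[x] be a monic polynomial of odd degree 2m+1 ≥ 3 with h and h′ coprime, and let A = k[x, y]/⟨y² − 2h(x)⟩. Then in the Lie algebra Der_k(A): (1) for every non-zero η ∈ Der_k(A), η is not in the image of ad(η), i.e., there is no ν ∈ Der_k(A) with [η, ν] = η; (2) there are no non-zero η, ν ∈ Der_k(A) and non-zero λ ∈ k with [ν, η] = λ·η (so Der_k(A) has no non-trivial semisimple elements); (3) if η ∈ Der_k(A) and ad(η) is nilpotent (some power of ad(η) is 0), then η = 0 (so Der_k(A) has no non-trivial nilpotent elements). -/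
set_option synthInstance.maxHeartbeats 400000

/-!
Every vector field on the curve is `f • D` with `D = y ∂/∂x + h'(x) ∂/∂y`, and
`⁅f • D, g • D⁆ = (f D(g) - g D(f)) • D`. The curve has one place at infinity, with residue field
`k`, and there the pole order of `f D(g) - g D(f)` is the sum of the pole orders of `f` and `g`
plus `deg h - 2 ≥ 1`, as soon as these two orders differ. So brackets of vector fields of different
pole orders are strictly more singular than both of them. If `⁅η, ν⁆ = η`, subtracting a multiple
of `η` from `ν` makes the pole orders differ, which is absurd; and iterating `ad η` on a vector
field with a pole of larger order than `η` never reaches zero.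

The pole order of `f` is the degree of its norm to `k[x]`. Multiplying `f` and `g` by the conjugate
of `f` reduces the formula above to the case `f ∈ k[x]`.
-/

open Polynomial
open scoped QuadraticAlgebra

section ExpandingDegree

variable {k L L' : Type*} [Field k] [LieRing L] [LieAlgebra k L] [LieRing L'] [LieAlgebra k L']

/-- A degree on a Lie algebra over `k` which the bracket of non-zero elements of different degrees
strictly increases, and for which elements of equal degree can be separated by subtracting a scalar
multiple. The degree of a non-zero element may be `0`, the value at `0`. -/
structure IsExpandingDegree (k : Type*) {L : Type*} [Field k] [LieRing L] [LieAlgebra k L]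
    (deg : L → ℕ) : Prop where
  map_zero : deg 0 = 0
  exists_sub_smul {η ν : L} : η ≠ 0 → ν ≠ 0 → deg η = deg ν →
    ∃ c : k, ν - c • η = 0 ∨ deg (ν - c • η) ≠ deg η
  max_lt_lie {η ν : L} : η ≠ 0 → ν ≠ 0 → deg η ≠ deg ν → max (deg η) (deg ν) < deg ⁅η, ν⁆

namespace IsExpandingDegree

variable {deg : L → ℕ}

theorem comp (hdeg : IsExpandingDegree k deg) {f : L' →ₗ⁅k⁆ L} (hf : Function.Injective f) :
    IsExpandingDegree k (deg ∘ f) where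
  map_zero := by simp [hdeg.map_zero]
  exists_sub_smul hη hν heq := by
    simpa [← map_smul, ← map_sub, map_eq_zero_iff f hf] using
      hdeg.exists_sub_smul ((map_ne_zero_iff f hf).mpr hη) ((map_ne_zero_iff f hf).mpr hν) heq
  max_lt_lie hη hν hne := by
    simpa using
      hdeg.max_lt_lie ((map_ne_zero_iff f hf).mpr hη) ((map_ne_zero_iff f hf).mpr hν) hne

theorem lie_ne_self (hdeg : IsExpandingDegree k deg) {η : L} (hη : η ≠ 0) (ν : L) :
    ⁅η, ν⁆ ≠ η := by
  have deg_eq {μ : L} (hμ : ⁅η, μ⁆ = η) : deg η = deg μ := by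
    by_contra hne
    have hμ0 : μ ≠ 0 := fun h0 => hη (by rw [← hμ, h0, lie_zero])
    have hlt := hdeg.max_lt_lie hη hμ0 hne
    rw [hμ] at hlt
    exact hlt.not_ge (le_max_left _ _)
  intro hν
  have hν0 : ν ≠ 0 := fun h0 => hη (by rw [← hν, h0, lie_zero])
  obtain ⟨c, hc⟩ := hdeg.exists_sub_smul hη hν0 (deg_eq hν)
  have hlie : ⁅η, ν - c • η⁆ = η := by rw [lie_sub, lie_smul, lie_self, smul_zero, sub_zero, hν]
  rcases hc with hzero | hne
  · exact hη (by rw [← hlie, hzero, lie_zero])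
  · exact hne (deg_eq hlie).symm

theorem lie_ne_smul (hdeg : IsExpandingDegree k deg) {η : L} (hη : η ≠ 0) (ν : L) {l : k}
    (hl : l ≠ 0) : ⁅ν, η⁆ ≠ l • η := by
  intro hν
  refine hdeg.lie_ne_self hη (-(l⁻¹ • ν)) ?_
  rw [lie_neg, lie_smul, ← smul_neg, lie_skew, hν, inv_smul_smul₀ hl]

theorem not_isNilpotent_ad (hdeg : IsExpandingDegree k deg) {η ν : L} (hη : η ≠ 0)
    (hlt : deg η < deg ν) : ¬ IsNilpotent (LieAlgebra.ad k L η) := by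
  have lt_iterate (n : ℕ) : deg η < deg ((LieAlgebra.ad k L η ^ n) ν) := by
    induction n with
    | zero => simpa using hlt
    | succ n ih =>
      rw [pow_succ', Module.End.mul_apply, LieAlgebra.ad_apply]
      set μ := (LieAlgebra.ad k L η ^ n) ν
      have hμ : μ ≠ 0 := fun h0 => by simp [h0, hdeg.map_zero] at ih
      exact (le_max_left _ _).trans_lt (hdeg.max_lt_lie hη hμ ih.ne)
  rintro ⟨n, hn⟩
  simpa [hn, hdeg.map_zero] using lt_iterate n

end IsExpandingDegree

end ExpandingDegree

section Derivations

variable {R A B : Type*} [CommRing R] [CommRing A] [Algebra R A] [CommRing B] [Algebra R B]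

/-- The derivation `e ∘ D ∘ e⁻¹` transported from `D` along an isomorphism of algebras. -/
def derivationConj (e : A ≃ₐ[R] B) (D : Derivation R A A) : Derivation R B B :=
  Derivation.mk' (e.toLinearMap ∘ₗ D.toLinearMap ∘ₗ e.symm.toLinearMap) fun a b => by simp

@[simp]
theorem derivationConj_apply (e : A ≃ₐ[R] B) (D : Derivation R A A) (b : B) :
    derivationConj e D b = e (D (e.symm b)) := rfl

/-- Transport of derivations along an isomorphism of algebras, as an isomorphism of Lie algebras. -/
def derivationCongr (e : A ≃ₐ[R] B) : Derivation R A A ≃ₗ⁅R⁆ Derivation R B B where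
  toFun := derivationConj e
  invFun := derivationConj e.symm
  map_add' D E := by ext; simp
  map_smul' r D := by ext; simp
  map_lie' {D E} := by ext; simp [Derivation.commutator_apply]
  left_inv D := by ext; simp
  right_inv D := by ext; simp

/-- The coefficient of `⁅f • D, g • D⁆` with respect to the derivation `D`. -/
def bracketCoeff (D : Derivation R A A) (f g : A) : A := f * D g - g * D f

theorem smul_lie_smul (D : Derivation R A A) (f g : A) :
    ⁅f • D, g • D⁆ = bracketCoeff D f g • D := by
  ext a
  simp only [bracketCoeff, Derivation.commutator_apply, Derivation.smul_apply, smul_eq_mul,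
    Derivation.leibniz]
  ring

theorem bracketCoeff_mul_mul (D : Derivation R A A) (c f g : A) :
    bracketCoeff D (c * f) (c * g) = c ^ 2 * bracketCoeff D f g := by
  simp only [bracketCoeff, Derivation.leibniz, smul_eq_mul]
  ring

end Derivations

section Wronskian

variable {R : Type*} [CommRing R]

theorem coeff_X_mul_derivative (p : R[X]) (n : ℕ) :
    (X * derivative p).coeff n = n * p.coeff n := by
  cases n with
  | zero => simp
  | succ n => rw [coeff_X_mul, coeff_derivative, mul_comm, Nat.cast_succ]

theorem natDegree_X_mul_derivative_le (p : R[X]) : (X * derivative p).natDegree ≤ p.natDegree :=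
  natDegree_le_iff_coeff_eq_zero.mpr fun n hn => by
    rw [coeff_X_mul_derivative, coeff_eq_zero_of_natDegree_lt hn, mul_zero]

theorem coeff_X_mul_wronskian (a b : R[X]) :
    (X * wronskian a b).coeff (a.natDegree + b.natDegree) =
      ((b.natDegree : R) - a.natDegree) * (a.leadingCoeff * b.leadingCoeff) := by
  have hW : X * wronskian a b = a * (X * derivative b) - (X * derivative a) * b := by
    rw [wronskian]; ring
  rw [hW, coeff_sub, coeff_mul_add_eq_of_natDegree_le le_rfl (natDegree_X_mul_derivative_le b),
    coeff_mul_add_eq_of_natDegree_le (natDegree_X_mul_derivative_le a) le_rfl,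
    coeff_X_mul_derivative, coeff_X_mul_derivative]
  simp only [leadingCoeff]
  ring

variable [NoZeroDivisors R] [CharZero R] {a b : R[X]}

theorem wronskian_ne_zero_of_natDegree_ne (ha : a ≠ 0) (hb : b ≠ 0)
    (hne : a.natDegree ≠ b.natDegree) : wronskian a b ≠ 0 := by
  intro h0
  have hcoeff := coeff_X_mul_wronskian a b
  rw [h0, mul_zero, coeff_zero, eq_comm] at hcoeff
  simp [sub_eq_zero, ha, hb, hne.symm] at hcoeff

theorem natDegree_wronskian_add_one (ha : a ≠ 0) (hb : b ≠ 0) (hne : a.natDegree ≠ b.natDegree) :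
    (wronskian a b).natDegree + 1 = a.natDegree + b.natDegree := by
  have hW := wronskian_ne_zero_of_natDegree_ne ha hb hne
  have hcoeff : (X * wronskian a b).coeff (a.natDegree + b.natDegree) ≠ 0 := by
    rw [coeff_X_mul_wronskian]
    simp [sub_eq_zero, ha, hb, hne.symm]
  refine le_antisymm (natDegree_wronskian_lt_add hW) ?_
  rw [← natDegree_X_mul hW]
  exact le_natDegree_of_ne_zero hcoeff

end Wronskian

/-- The ring of functions `k[x] ⊕ k[x] y`, `y² = 2h(x)`, on a hyperelliptic curve; `re` and `im` are
the coefficients of `1` and `y`, and `ω` is `y`. -/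
abbrev HyperellipticRing {k : Type*} [Field k] (h : k[X]) := QuadraticAlgebra k[X] (2 * h) 0

namespace HyperellipticRing

variable {k : Type*} [Field k] (h : k[X])

/-- The coordinate function `x`. -/
noncomputable def x : HyperellipticRing h := algebraMap k[X] _ X

variable {h}

theorem aeval_x (p : k[X]) : aeval (x h) p = algebraMap k[X] _ p := by
  rw [x, aeval_algebraMap_apply, aeval_X_left_apply]

theorem aeval_re_add_aeval_im_mul_omega (f : HyperellipticRing h) :
    aeval (x h) f.re + aeval (x h) f.im * ω = f := by
  rw [aeval_x, aeval_x]
  ext <;> simp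

theorem algHom_ext {A : Type*} [CommRing A] [Algebra k A] {φ ψ : HyperellipticRing h →ₐ[k] A}
    (hx : φ (x h) = ψ (x h)) (hω : φ ω = ψ ω) : φ = ψ := by
  ext f
  rw [← aeval_re_add_aeval_im_mul_omega f]
  simp only [map_add, map_mul, ← aeval_algHom_apply, hx, hω]

theorem derivation_ext {D E : Derivation k (HyperellipticRing h) (HyperellipticRing h)}
    (hx : D (x h) = E (x h)) (hω : D ω = E ω) : D = E := by
  ext1 f
  rw [← aeval_re_add_aeval_im_mul_omega f]
  simp only [map_add, Derivation.leibniz, Derivation.map_aeval, hx, hω]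

theorem omega_sq : (ω : HyperellipticRing h) ^ 2 = 2 * aeval (x h) h := by
  rw [aeval_x, sq]
  ext <;> simp

section Presentation

variable {A : Type*} [CommRing A] [Algebra k A]

/-- The homomorphism of `k`-algebras determined by a point `(u, v)` of the curve with values
in `A`. -/
noncomputable def lift (u v : A) (huv : v ^ 2 = 2 * aeval u h) : HyperellipticRing h →ₐ[k] A where
  toFun f := aeval u f.re + aeval u f.im * v
  map_one' := by simp
  map_mul' f g := by
    simp only [QuadraticAlgebra.re_mul, QuadraticAlgebra.im_mul, map_add, map_mul, map_ofNat,
      zero_mul, add_zero]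
    linear_combination -(aeval u f.im * aeval u g.im) * huv
  map_zero' := by simp
  map_add' f g := by
    simp only [QuadraticAlgebra.re_add, QuadraticAlgebra.im_add, map_add]
    ring
  commutes' r := by simp [IsScalarTower.algebraMap_apply k k[X] (HyperellipticRing h)]

theorem lift_apply (u v : A) (huv : v ^ 2 = 2 * aeval u h) (f : HyperellipticRing h) :
    lift u v huv f = aeval u f.re + aeval u f.im * v := rfl

@[simp]
theorem lift_x (u v : A) (huv : v ^ 2 = 2 * aeval u h) : lift u v huv (x h) = u := by
  simp [lift_apply, x]

@[simp]
theorem lift_omega (u v : A) (huv : v ^ 2 = 2 * aeval u h) : lift u v huv ω = v := by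
  simp [lift_apply]

variable (h)

/-- The ideal `(X₁² - 2h(X₀))` of the curve in the plane. -/
noncomputable def curveIdeal : Ideal (MvPolynomial (Fin 2) k) :=
  Ideal.span {MvPolynomial.X 1 ^ 2 - 2 * aeval (MvPolynomial.X 0) h}

/-- The homomorphism `X₀ ↦ x`, `X₁ ↦ y` from the presentation `k[X₀, X₁] / (X₁² - 2h(X₀))` of the
ring of functions. -/
noncomputable def presentationHom :
    (MvPolynomial (Fin 2) k ⧸ curveIdeal h) →ₐ[k] HyperellipticRing h :=
  Ideal.Quotient.liftₐ _ (MvPolynomial.aeval ![x h, ω]) <| by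
    change Ideal.span _ ≤ RingHom.ker _
    rw [Ideal.span_singleton_le_iff_mem, RingHom.mem_ker]
    simp [← aeval_algHom_apply, omega_sq]

theorem presentationHom_mk (p : MvPolynomial (Fin 2) k) :
    presentationHom h (Ideal.Quotient.mkₐ k (curveIdeal h) p) = MvPolynomial.aeval ![x h, ω] p :=
  rfl

/-- The isomorphism `k[X₀, X₁] / (X₁² - 2h(X₀)) ≅ k[x] ⊕ k[x] y` with `X₀ ↦ x` and `X₁ ↦ y`. -/
noncomputable def presentationEquiv :
    (MvPolynomial (Fin 2) k ⧸ curveIdeal h) ≃ₐ[k] HyperellipticRing h :=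
  AlgEquiv.ofAlgHom (presentationHom h)
    (lift (Ideal.Quotient.mkₐ k _ (.X 0)) (Ideal.Quotient.mkₐ k _ (.X 1)) <| by
      rw [aeval_algHom_apply, ← map_pow, ← map_ofNat (Ideal.Quotient.mkₐ k _) 2, ← map_mul]
      exact Ideal.Quotient.eq.mpr (Ideal.mem_span_singleton_self _))
    (algHom_ext (by simp [presentationHom_mk, -Ideal.Quotient.mkₐ_eq_mk])
      (by simp [presentationHom_mk, -Ideal.Quotient.mkₐ_eq_mk]))
    (Ideal.Quotient.algHom_ext _ <| MvPolynomial.algHom_ext fun i => by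
      fin_cases i <;> simp [presentationHom_mk, -Ideal.Quotient.mkₐ_eq_mk])

end Presentation

section PoleOrder

/-- The order of the pole of `f` at the point at infinity when `h` has odd degree, computed as the
degree of the norm to `k[x]`; the value at `0` is `0`. -/
noncomputable def poleOrder (f : HyperellipticRing h) : ℕ := (QuadraticAlgebra.norm f).natDegree

theorem norm_eq (f : HyperellipticRing h) :
    QuadraticAlgebra.norm f = f.re ^ 2 - 2 * h * f.im ^ 2 := by
  rw [QuadraticAlgebra.norm_def]
  ring

theorem poleOrder_of_im_eq_zero {f : HyperellipticRing h} (hf : f.im = 0) :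
    poleOrder f = 2 * f.re.natDegree := by
  simp [poleOrder, norm_eq, hf]

theorem poleOrder_zero : poleOrder (0 : HyperellipticRing h) = 0 := by
  simp [poleOrder]

theorem ne_zero_of_poleOrder_pos {f : HyperellipticRing h} (hf : 0 < poleOrder f) : f ≠ 0 := by
  rintro rfl
  exact hf.ne' poleOrder_zero

theorem poleOrder_star (f : HyperellipticRing h) : poleOrder (star f) = poleOrder f := by
  rw [poleOrder, QuadraticAlgebra.norm_star, poleOrder]

theorem poleOrder_x : poleOrder (x h) = 2 := by
  simp [poleOrder, x]

variable [NeZero (2 : k)]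

theorem poleOrder_of_im_ne_zero (hodd : Odd h.natDegree) {f : HyperellipticRing h}
    (hf : f.im ≠ 0) :
    poleOrder f = max (2 * f.re.natDegree) (2 * f.im.natDegree + h.natDegree) := by
  have h0 : h ≠ 0 := by rintro rfl; simp at hodd
  have htwo : (2 : k[X]) ≠ 0 := C_ne_zero.mpr (two_ne_zero' k)
  have hre : (f.re ^ 2).natDegree = 2 * f.re.natDegree := natDegree_pow _ _
  have him : (2 * h * f.im ^ 2).natDegree = 2 * f.im.natDegree + h.natDegree := by
    rw [natDegree_mul (mul_ne_zero htwo h0) (pow_ne_zero 2 hf), natDegree_mul htwo h0,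
      natDegree_ofNat, natDegree_pow]
    ring
  rw [poleOrder, norm_eq]
  obtain ⟨m, hm⟩ := hodd
  rcases lt_or_gt_of_ne (show 2 * f.re.natDegree ≠ 2 * f.im.natDegree + h.natDegree by omega)
    with hlt | hlt
  · rw [natDegree_sub_eq_right_of_natDegree_lt (by omega), him, max_eq_right hlt.le]
  · rw [natDegree_sub_eq_left_of_natDegree_lt (by omega), hre, max_eq_left hlt.le]

theorem norm_ne_zero (hodd : Odd h.natDegree) {f : HyperellipticRing h} (hf : f ≠ 0) :
    QuadraticAlgebra.norm f ≠ 0 := by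
  intro hnorm
  have hpole : poleOrder f = 0 := by rw [poleOrder, hnorm, natDegree_zero]
  by_cases him : f.im = 0
  · rw [norm_eq, him] at hnorm
    exact hf (QuadraticAlgebra.ext (by simpa using hnorm) him)
  · rw [poleOrder_of_im_ne_zero hodd him] at hpole
    have := hodd.pos
    omega

theorem mul_ne_zero_of_odd (hodd : Odd h.natDegree) {f g : HyperellipticRing h} (hf : f ≠ 0)
    (hg : g ≠ 0) : f * g ≠ 0 := by
  intro hfg
  have hnorm := mul_ne_zero (norm_ne_zero hodd hf) (norm_ne_zero hodd hg)
  rw [← map_mul, hfg, QuadraticAlgebra.norm_zero] at hnorm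
  exact hnorm rfl

theorem poleOrder_mul (hodd : Odd h.natDegree) {f g : HyperellipticRing h} (hf : f ≠ 0)
    (hg : g ≠ 0) : poleOrder (f * g) = poleOrder f + poleOrder g := by
  rw [poleOrder, map_mul, natDegree_mul (norm_ne_zero hodd hf) (norm_ne_zero hodd hg), poleOrder,
    poleOrder]

theorem poleOrder_omega (hodd : Odd h.natDegree) :
    poleOrder (ω : HyperellipticRing h) = h.natDegree := by
  rw [poleOrder_of_im_ne_zero hodd (by simp)]
  simp

/-- The coefficient of `f` at the unique monomial `xⁱ` or `xⁱ y` whose pole at infinity has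
order `n`; a junk value if there is none. -/
noncomputable def symbolCoeff (h : k[X]) (n : ℕ) : HyperellipticRing h →ₗ[k] k :=
  if Even n then lcoeff k (n / 2) ∘ₗ (QuadraticAlgebra.reₗ _ _).restrictScalars k
  else lcoeff k ((n - h.natDegree) / 2) ∘ₗ (QuadraticAlgebra.imₗ _ _).restrictScalars k

theorem symbolCoeff_poleOrder_ne_zero (hodd : Odd h.natDegree) {f : HyperellipticRing h}
    (hf : f ≠ 0) : symbolCoeff h (poleOrder f) f ≠ 0 := by
  have h0 : 0 < h.natDegree := hodd.pos
  by_cases him : f.im = 0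
  · have hre : f.re ≠ 0 := fun hre => hf (QuadraticAlgebra.ext hre him)
    simpa [symbolCoeff, poleOrder_of_im_eq_zero him] using hre
  rw [poleOrder_of_im_ne_zero hodd him]
  rcases le_total (2 * f.re.natDegree) (2 * f.im.natDegree + h.natDegree) with hle | hle
  · have hn : ¬ Even (2 * f.im.natDegree + h.natDegree) := by
      rw [Nat.not_even_iff_odd]
      exact (even_two_mul _).add_odd hodd
    simpa [symbolCoeff, max_eq_right hle, hn] using him
  · have hre : f.re ≠ 0 := by
      rintro hre
      rw [hre, natDegree_zero] at hle
      omega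
    simpa [symbolCoeff, max_eq_left hle] using hre

theorem exists_sub_smul_poleOrder_ne (hodd : Odd h.natDegree) {f : HyperellipticRing h}
    (hf : f ≠ 0) (g : HyperellipticRing h) :
    ∃ c : k, g - c • f = 0 ∨ poleOrder (g - c • f) ≠ poleOrder f := by
  let s := symbolCoeff h (poleOrder f)
  have hsf : s f ≠ 0 := symbolCoeff_poleOrder_ne_zero hodd hf
  refine ⟨s g / s f, or_iff_not_imp_left.mpr fun hne heq => ?_⟩
  refine symbolCoeff_poleOrder_ne_zero hodd hne ?_
  rw [heq]
  change s _ = 0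
  rw [map_sub, map_smul, smul_eq_mul, div_mul_cancel₀ _ hsf, sub_self]

end PoleOrder

section VectorField

/-- The vector field `y ∂/∂x + h'(x) ∂/∂y`, a generator of the module of vector fields if the curve
is non-singular. -/
noncomputable def vectorField (h : k[X]) :
    Derivation k (HyperellipticRing h) (HyperellipticRing h) :=
  Derivation.mk'
    { toFun f := ⟨2 * h * derivative f.im + derivative h * f.im, derivative f.re⟩
      map_add' f g := by
        ext1
        · simp only [QuadraticAlgebra.re_add, QuadraticAlgebra.im_add, map_add]
          ring
        · simp
      map_smul' r f := by ext1 <;> simp [smul_add] }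
    fun f g => by
      ext1
      all_goals
        simp only [LinearMap.coe_mk, AddHom.coe_mk, QuadraticAlgebra.re_mul,
          QuadraticAlgebra.im_mul, QuadraticAlgebra.re_add, QuadraticAlgebra.im_add, smul_eq_mul,
          derivative_add, derivative_mul, derivative_ofNat, zero_mul, zero_add, add_zero]
        ring

theorem vectorField_apply (f : HyperellipticRing h) :
    vectorField h f = ⟨2 * h * derivative f.im + derivative h * f.im, derivative f.re⟩ := rfl

@[simp]
theorem vectorField_x : vectorField h (x h) = ω := by
  rw [vectorField_apply]
  ext1 <;> simp [x]

@[simp]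
theorem vectorField_omega : vectorField h ω = aeval (x h) (derivative h) := by
  rw [vectorField_apply, aeval_x]
  ext1 <;> simp

section Generator

variable [NeZero (2 : k)]

theorem omega_mul_derivation_omega (D : Derivation k (HyperellipticRing h) (HyperellipticRing h)) :
    ω * D ω = aeval (x h) (derivative h) * D (x h) := by
  have hD := congrArg D (omega_sq (h := h))
  rw [sq, D.leibniz, ← two_smul k, ← map_ofNat (algebraMap k (HyperellipticRing h)) 2,
    ← Algebra.smul_def, D.map_smul, Derivation.map_aeval] at hD
  exact smul_right_injective _ (two_ne_zero' k) hD

theorem exists_eq_smul_vectorField (hcop : IsCoprime h (derivative h))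
    (D : Derivation k (HyperellipticRing h) (HyperellipticRing h)) :
    ∃ f : HyperellipticRing h, D = f • vectorField h := by
  have htwo : IsUnit (2 : k[X]) := isUnit_C.mpr (two_ne_zero' k).isUnit
  obtain ⟨u, v, huv⟩ := (isCoprime_mul_unit_left_left htwo h (derivative h)).mpr hcop
  have hbezout := congrArg (aeval (x h)) huv
  simp only [map_add, map_mul, map_ofNat, map_one] at hbezout
  have homega := omega_sq (h := h)
  have hD := omega_mul_derivation_omega D
  refine ⟨aeval (x h) u * ω * D (x h) + aeval (x h) v * D ω, derivation_ext ?_ ?_⟩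
  · rw [Derivation.smul_apply, vectorField_x, smul_eq_mul]
    linear_combination -D (x h) * hbezout - aeval (x h) u * D (x h) * homega - aeval (x h) v * hD
  · rw [Derivation.smul_apply, vectorField_omega, smul_eq_mul]
    linear_combination -D ω * hbezout - aeval (x h) u * D ω * homega + aeval (x h) u * ω * hD

theorem exists_ne_zero_eq_smul_vectorField (hcop : IsCoprime h (derivative h))
    {D : Derivation k (HyperellipticRing h) (HyperellipticRing h)} (hD : D ≠ 0) :
    ∃ f : HyperellipticRing h, f ≠ 0 ∧ D = f • vectorField h := by
  obtain ⟨f, rfl⟩ := exists_eq_smul_vectorField hcop D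
  exact ⟨f, fun hf => hD (by rw [hf, zero_smul]), rfl⟩

end Generator

section Bracket

theorem im_bracketCoeff_algebraMap (p : k[X]) (f : HyperellipticRing h) :
    (bracketCoeff (vectorField h) (algebraMap k[X] _ p) f).im = wronskian p f.re := by
  simp [bracketCoeff, vectorField_apply, wronskian, mul_comm]

theorem mul_re_bracketCoeff_algebraMap (p : k[X]) (f : HyperellipticRing h) :
    p * (f.im * (bracketCoeff (vectorField h) (algebraMap k[X] _ p) f).re) =
      wronskian (p ^ 2) (h * f.im ^ 2) := by
  simp only [bracketCoeff, vectorField_apply, wronskian, sq, QuadraticAlgebra.algebraMap_re,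
    QuadraticAlgebra.algebraMap_im, QuadraticAlgebra.re_sub, QuadraticAlgebra.re_mul,
    derivative_zero, derivative_mul, mul_zero, zero_mul, add_zero, zero_add]
  ring

variable [CharZero k] {p : k[X]} {f g : HyperellipticRing h}

theorem natDegree_re_bracketCoeff_algebraMap (hodd : Odd h.natDegree) (hp : p ≠ 0)
    (him : f.im ≠ 0) :
    (bracketCoeff (vectorField h) (algebraMap k[X] _ p) f).re.natDegree + 1 =
      p.natDegree + f.im.natDegree + h.natDegree := by
  have h0 : h ≠ 0 := by rintro rfl; simp at hodd
  have hp2 : p ^ 2 ≠ 0 := pow_ne_zero 2 hp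
  have hq : h * f.im ^ 2 ≠ 0 := mul_ne_zero h0 (pow_ne_zero 2 him)
  have hdegp : (p ^ 2).natDegree = 2 * p.natDegree := natDegree_pow _ _
  have hdegq : (h * f.im ^ 2).natDegree = h.natDegree + 2 * f.im.natDegree := by
    rw [natDegree_mul h0 (pow_ne_zero 2 him), natDegree_pow]
  have hne : (p ^ 2).natDegree ≠ (h * f.im ^ 2).natDegree := by
    obtain ⟨m, hm⟩ := hodd
    omega
  have hW := wronskian_ne_zero_of_natDegree_ne hp2 hq hne
  have hdeg := natDegree_wronskian_add_one hp2 hq hne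
  rw [← mul_re_bracketCoeff_algebraMap] at hW hdeg
  rw [natDegree_mul hp (right_ne_zero_of_mul hW), natDegree_mul him
    (right_ne_zero_of_mul (right_ne_zero_of_mul hW)), hdegp, hdegq] at hdeg
  omega

theorem poleOrder_bracketCoeff_algebraMap_of_im_eq_zero (hodd : Odd h.natDegree) (hp : p ≠ 0)
    (hf : f ≠ 0) (him : f.im = 0) (hne : 2 * p.natDegree ≠ poleOrder f) :
    poleOrder (bracketCoeff (vectorField h) (algebraMap k[X] _ p) f) + 2 =
      2 * p.natDegree + poleOrder f + h.natDegree := by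
  have hb_im := im_bracketCoeff_algebraMap p f
  have hb_re : (bracketCoeff (vectorField h) (algebraMap k[X] _ p) f).re = 0 := by
    simp [bracketCoeff, vectorField_apply, him]
  rw [poleOrder_of_im_eq_zero him] at hne ⊢
  have hre : f.re ≠ 0 := fun hre => hf (QuadraticAlgebra.ext hre him)
  have hdeg : p.natDegree ≠ f.re.natDegree := by omega
  have hW := natDegree_wronskian_add_one hp hre hdeg
  rw [poleOrder_of_im_ne_zero hodd (hb_im ▸ wronskian_ne_zero_of_natDegree_ne hp hre hdeg), hb_re,
    hb_im, natDegree_zero]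
  omega

theorem poleOrder_bracketCoeff_algebraMap_of_im_ne_zero (hodd : Odd h.natDegree) (hp : p ≠ 0)
    (him : f.im ≠ 0) (hne : 2 * p.natDegree ≠ poleOrder f) :
    poleOrder (bracketCoeff (vectorField h) (algebraMap k[X] _ p) f) + 2 =
      2 * p.natDegree + poleOrder f + h.natDegree := by
  have hb_im := im_bracketCoeff_algebraMap p f
  have hb_re := natDegree_re_bracketCoeff_algebraMap hodd hp him
  have hre_ne (hlt : 2 * f.im.natDegree + h.natDegree < 2 * f.re.natDegree) : f.re ≠ 0 := by
    rintro hre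
    simp [hre] at hlt
  rw [poleOrder_of_im_ne_zero hodd him] at hne ⊢
  by_cases hW : wronskian p f.re = 0
  · have hle : 2 * f.re.natDegree ≤ 2 * f.im.natDegree + h.natDegree := by
      by_contra! hlt
      exact wronskian_ne_zero_of_natDegree_ne hp (hre_ne hlt) (by omega) hW
    rw [poleOrder_of_im_eq_zero (hb_im.trans hW)]
    omega
  · have hle := natDegree_wronskian_lt_add hW
    have heq (hlt : 2 * f.im.natDegree + h.natDegree < 2 * f.re.natDegree) :=
      natDegree_wronskian_add_one hp (hre_ne hlt) (by omega)
    rw [poleOrder_of_im_ne_zero hodd (hb_im ▸ hW), hb_im]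
    omega

theorem poleOrder_bracketCoeff_algebraMap (hodd : Odd h.natDegree) (hp : p ≠ 0) (hf : f ≠ 0)
    (hne : 2 * p.natDegree ≠ poleOrder f) :
    poleOrder (bracketCoeff (vectorField h) (algebraMap k[X] _ p) f) + 2 =
      2 * p.natDegree + poleOrder f + h.natDegree := by
  by_cases him : f.im = 0
  · exact poleOrder_bracketCoeff_algebraMap_of_im_eq_zero hodd hp hf him hne
  · exact poleOrder_bracketCoeff_algebraMap_of_im_ne_zero hodd hp him hne

theorem poleOrder_bracketCoeff (hodd : Odd h.natDegree) (hdeg : 1 < h.natDegree) (hf : f ≠ 0)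
    (hg : g ≠ 0) (hne : poleOrder f ≠ poleOrder g) :
    poleOrder (bracketCoeff (vectorField h) f g) + 2 =
      poleOrder f + poleOrder g + h.natDegree := by
  have hf' : star f ≠ 0 := star_ne_zero.mpr hf
  have hfg : star f * g ≠ 0 := mul_ne_zero_of_odd hodd hf' hg
  have hpole : poleOrder (star f * g) = poleOrder f + poleOrder g := by
    rw [poleOrder_mul hodd hf' hg, poleOrder_star]
  have hnorm : algebraMap k[X] _ (QuadraticAlgebra.norm f) = star f * f := by
    rw [QuadraticAlgebra.algebraMap_norm_eq_mul_star, mul_comm]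
  have hmul := poleOrder_bracketCoeff_algebraMap hodd (norm_ne_zero hodd hf) hfg
    (by rw [hpole, ← poleOrder]; omega)
  rw [hnorm, bracketCoeff_mul_mul, hpole, ← poleOrder] at hmul
  have hprod : star f ^ 2 * bracketCoeff (vectorField h) f g ≠ 0 :=
    ne_zero_of_poleOrder_pos (by omega)
  have hb := right_ne_zero_of_mul hprod
  rw [sq, mul_assoc, poleOrder_mul hodd hf' (mul_ne_zero_of_odd hodd hf' hb),
    poleOrder_mul hodd hf' hb, poleOrder_star] at hmul
  omega

end Bracket

section Degree

/-- The order of the pole of `D x` at infinity. On the multiples `f • vectorField h` with `f ≠ 0` it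
is the pole order of `f`, shifted by the degree of `h`. -/
noncomputable def fieldDegree (D : Derivation k (HyperellipticRing h) (HyperellipticRing h)) : ℕ :=
  poleOrder (D (x h))

variable [CharZero k]

theorem fieldDegree_smul_vectorField (hodd : Odd h.natDegree) {f : HyperellipticRing h}
    (hf : f ≠ 0) : fieldDegree (f • vectorField h) = poleOrder f + h.natDegree := by
  have homega : (ω : HyperellipticRing h) ≠ 0 := by simp [QuadraticAlgebra.ext_iff]
  rw [fieldDegree, Derivation.smul_apply, vectorField_x, smul_eq_mul,
    poleOrder_mul hodd hf homega, poleOrder_omega hodd]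

theorem fieldDegree_x_smul (hodd : Odd h.natDegree) (hcop : IsCoprime h (derivative h))
    {D : Derivation k (HyperellipticRing h) (HyperellipticRing h)} (hD : D ≠ 0) :
    fieldDegree (x h • D) = fieldDegree D + 2 := by
  obtain ⟨f, hf, rfl⟩ := exists_ne_zero_eq_smul_vectorField hcop hD
  have hx : x h ≠ 0 := by simp [x]
  rw [smul_smul, fieldDegree_smul_vectorField hodd (mul_ne_zero_of_odd hodd hx hf),
    fieldDegree_smul_vectorField hodd hf, poleOrder_mul hodd hx hf, poleOrder_x]
  ring

theorem isExpandingDegree_fieldDegree (hodd : Odd h.natDegree) (hdeg : 1 < h.natDegree)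
    (hcop : IsCoprime h (derivative h)) : IsExpandingDegree k (fieldDegree (h := h)) where
  map_zero := by rw [fieldDegree, Derivation.zero_apply, poleOrder_zero]
  exists_sub_smul {η ν} hη hν _ := by
    obtain ⟨f, hf, rfl⟩ := exists_ne_zero_eq_smul_vectorField hcop hη
    obtain ⟨g, -, rfl⟩ := exists_ne_zero_eq_smul_vectorField hcop hν
    obtain ⟨c, hc⟩ := exists_sub_smul_poleOrder_ne hodd hf g
    refine ⟨c, ?_⟩
    rw [← smul_assoc, ← sub_smul g (c • f) (vectorField h)]
    by_cases h0 : g - c • f = 0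
    · exact .inl (by rw [h0, zero_smul])
    · rw [fieldDegree_smul_vectorField hodd h0, fieldDegree_smul_vectorField hodd hf]
      exact .inr fun heq => hc.resolve_left h0 (Nat.add_right_cancel heq)
  max_lt_lie {η ν} hη hν hne := by
    obtain ⟨f, hf, rfl⟩ := exists_ne_zero_eq_smul_vectorField hcop hη
    obtain ⟨g, hg, rfl⟩ := exists_ne_zero_eq_smul_vectorField hcop hν
    rw [fieldDegree_smul_vectorField hodd hf, fieldDegree_smul_vectorField hodd hg] at hne ⊢
    have hbracket := poleOrder_bracketCoeff hodd hdeg hf hg (by omega)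
    rw [smul_lie_smul,
      fieldDegree_smul_vectorField hodd (ne_zero_of_poleOrder_pos (by omega))]
    obtain ⟨m, hm⟩ := hodd
    omega

end Degree

end VectorField

end HyperellipticRing

open HyperellipticRing in
theorem hyperelliptic_no_semisimple_or_nilpotent_general
    (k : Type*) [Field k] [CharZero k] (h : k[X]) (hodd : Odd h.natDegree)
    (hdeg : 1 < h.natDegree) (hcop : IsCoprime h (derivative h))
    (I : Ideal (MvPolynomial (Fin 2) k))
    (hI : I = Ideal.span {MvPolynomial.X 1 ^ 2 - 2 * aeval (MvPolynomial.X 0) h}) :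
    (∀ η : Derivation k (MvPolynomial (Fin 2) k ⧸ I) (MvPolynomial (Fin 2) k ⧸ I),
      η ≠ 0 → ¬ ∃ ν, ⁅η, ν⁆ = η) ∧
    (¬ ∃ (η ν : Derivation k (MvPolynomial (Fin 2) k ⧸ I) (MvPolynomial (Fin 2) k ⧸ I))
        (l : k), η ≠ 0 ∧ ν ≠ 0 ∧ l ≠ 0 ∧ ⁅ν, η⁆ = l • η) ∧
    (∀ η : Derivation k (MvPolynomial (Fin 2) k ⧸ I) (MvPolynomial (Fin 2) k ⧸ I),
      IsNilpotent (LieAlgebra.ad k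
        (Derivation k (MvPolynomial (Fin 2) k ⧸ I) (MvPolynomial (Fin 2) k ⧸ I)) η) →
      η = 0) := by
  obtain rfl : I = curveIdeal h := hI
  let e := derivationCongr (presentationEquiv h)
  have hdegree := (isExpandingDegree_fieldDegree hodd hdeg hcop).comp (f := e.toLieHom) e.injective
  refine ⟨fun η hη ⟨ν, hν⟩ => hdegree.lie_ne_self hη ν hν,
    fun ⟨η, ν, l, hη, _, hl, hν⟩ => hdegree.lie_ne_smul hη ν hl hν, fun η => ?_⟩
  contrapose!
  intro hη
  have hlt : fieldDegree (e η) < fieldDegree (e (e.symm (x h • e η))) := by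
    rw [e.apply_symm_apply, fieldDegree_x_smul hodd hcop]
    · omega
    · exact (map_ne_zero_iff e e.injective).mpr hη
  exact hdegree.not_isNilpotent_ad hη hlt

/-- On a non-singular hyperelliptic curve `y² = 2h(x)`: (1) no non-zero vector field `η` lies
in the image of `ad(η)`; (2) the Lie algebra of vector fields has no non-trivial semisimple
elements; (3) it has no non-trivial nilpotent elements. -/
theorem hyperelliptic_no_semisimple_or_nilpotent
    (k : Type*) [Field k] [IsAlgClosed k] [CharZero k]
    (m : ℕ) (hm : 1 ≤ m)
    (h : Polynomial k) (hmonic : h.Monic) (hdeg : h.natDegree = 2 * m + 1)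
    (hcop : IsCoprime h (Polynomial.derivative h))
    (I : Ideal (MvPolynomial (Fin 2) k))
    (hI : I = Ideal.span {MvPolynomial.X 1 ^ 2 -
      2 * Polynomial.aeval (MvPolynomial.X 0) h}) :
    (∀ η : Derivation k (MvPolynomial (Fin 2) k ⧸ I) (MvPolynomial (Fin 2) k ⧸ I),
      η ≠ 0 → ¬ ∃ ν, ⁅η, ν⁆ = η) ∧
    (¬ ∃ (η ν : Derivation k (MvPolynomial (Fin 2) k ⧸ I) (MvPolynomial (Fin 2) k ⧸ I))
        (l : k), η ≠ 0 ∧ ν ≠ 0 ∧ l ≠ 0 ∧ ⁅ν, η⁆ = l • η) ∧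
    (∀ η : Derivation k (MvPolynomial (Fin 2) k ⧸ I) (MvPolynomial (Fin 2) k ⧸ I),
      IsNilpotent (LieAlgebra.ad k
        (Derivation k (MvPolynomial (Fin 2) k ⧸ I) (MvPolynomial (Fin 2) k ⧸ I)) η) →
      η = 0) :=
  hyperelliptic_no_semisimple_or_nilpotent_general k h ⟨m, hdeg⟩ (by omega) hcop I hI
end
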